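/- arXiv:2001.00317 — 3 statements merged into one kernel-verified Lean document; each statement's English description precedes it below -/
import Mathlib

section
/- Set w₀ = (1/2)·(2·(y ∘ y) − x ∘ z − z ∘ x), where f ∘ g := f · δ(g). Then D₁(w₀) = 0. -/
open MvPolynomial

/-!
By commutativity and the Leibniz rule, `w₀ = (1/2) δ(w)` for the discriminant `w = y² - x z`.
The derivation `∂₁` annihilates `w`, and it commutes with `δ` because it acts on the variables
by the same formulas in every order `r`. Hence `∂₁ w₀ = (1/2) δ(∂₁ w) = 0`, and every multiple of
`∂₁` annihilates `w₀` as well.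
-/

section CommRing

variable {R A : Type*} [CommRing R] [CommRing A] [Algebra R A]

theorem derivation_sq_sub_mul (δ : Derivation R A A) (x y z : A) :
    δ (y ^ 2 - x * z) = 2 * (y * δ y) - x * δ z - z * δ x := by
  rw [map_sub, sq, δ.leibniz, δ.leibniz]
  simp only [smul_eq_mul]
  ring

variable {δ d : Derivation R A A} {x y z : A}

theorem derivation_sq_sub_mul_eq_zero (hx : d x = 2 * y) (hy : d y = z) (hz : d z = 0) :
    d (y ^ 2 - x * z) = 0 := by
  rw [derivation_sq_sub_mul, hx, hy, hz]
  ring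

theorem derivation_comm_of_lie_eq_zero (h : ⁅d, δ⁆ = 0) (f : A) : d (δ f) = δ (d f) := by
  rw [← sub_eq_zero, ← Derivation.commutator_apply, h, Derivation.zero_apply]

theorem D1_w0_eq_zero_general (hcomm : ⁅d, δ⁆ = 0) (hx : d x = 2 * y) (hy : d y = z)
    (hz : d z = 0) (a : A) (c : R) :
    (a • d) (c • (2 * (y * δ y) - x * δ z - z * δ x)) = 0 := by
  have hd : d (2 * (y * δ y) - x * δ z - z * δ x) = 0 := by
    rw [← derivation_sq_sub_mul, derivation_comm_of_lie_eq_zero hcomm,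
      derivation_sq_sub_mul_eq_zero hx hy hz, map_zero]
  rw [Derivation.smul_apply, d.map_smul, hd, smul_zero, smul_zero]

end CommRing

section Jets

variable {R : Type*} [CommRing R]

theorem lie_eq_zero_of_apply_X_succ {ι : Type*}
    {δ d : Derivation R (MvPolynomial (ι × ℕ) R) (MvPolynomial (ι × ℕ) R)}
    (hδ : ∀ i r, δ (X (i, r)) = X (i, r + 1))
    (hd : ∀ i r, d (X (i, r + 1)) = δ (d (X (i, r)))) : ⁅d, δ⁆ = 0 := by
  refine derivation_ext fun ⟨i, r⟩ ↦ ?_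
  rw [Derivation.commutator_apply, hδ, hd, sub_self, Derivation.zero_apply]

theorem lie_eq_zero_of_apply_X_fin_three
    {δ d : Derivation R (MvPolynomial (Fin 3 × ℕ) R) (MvPolynomial (Fin 3 × ℕ) R)}
    (hδ : ∀ i r, δ (X (i, r)) = X (i, r + 1)) (hx : ∀ r, d (X (0, r)) = 2 * X (1, r))
    (hy : ∀ r, d (X (1, r)) = X (2, r)) (hz : ∀ r, d (X (2, r)) = 0) : ⁅d, δ⁆ = 0 := by
  refine lie_eq_zero_of_apply_X_succ hδ fun i r ↦ ?_
  match i with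
  | 0 => rw [hx, hx, two_mul, two_mul, map_add, hδ]
  | 1 => rw [hy, hy, hδ]
  | 2 => rw [hz, hz, map_zero]

end Jets

/-- With `w₀ = (1/2)(2(y∘y) - x∘z - z∘x)` (where `f ∘ g = f·δ g`) one has `D₁ w₀ = 0`. -/
theorem D1_w0_eq_zero (k : Type*) [Field k] [CharZero k]
    (δ d1 D1 : Derivation k (MvPolynomial (Fin 3 × ℕ) k) (MvPolynomial (Fin 3 × ℕ) k))
    (hδ : ∀ (i : Fin 3) (r : ℕ), δ (X (i, r)) = X (i, r + 1))
    (hd1x : ∀ r : ℕ, d1 (X ((0 : Fin 3), r)) = 2 * X ((1 : Fin 3), r))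
    (hd1y : ∀ r : ℕ, d1 (X ((1 : Fin 3), r)) = X ((2 : Fin 3), r))
    (hd1z : ∀ r : ℕ, d1 (X ((2 : Fin 3), r)) = 0)
    (w : MvPolynomial (Fin 3 × ℕ) k)
    (hw : w = X ((1 : Fin 3), (0 : ℕ)) ^ 2 - X ((0 : Fin 3), (0 : ℕ)) * X ((2 : Fin 3), (0 : ℕ)))
    (hD1 : ∀ f : MvPolynomial (Fin 3 × ℕ) k, D1 f = C ((2 : k)⁻¹) * δ (δ w) * d1 f)
    (w0 : MvPolynomial (Fin 3 × ℕ) k)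
    (hw0 : w0 = C ((2 : k)⁻¹) *
      (2 * (X ((1 : Fin 3), (0 : ℕ)) * δ (X ((1 : Fin 3), (0 : ℕ)))) -
        X ((0 : Fin 3), (0 : ℕ)) * δ (X ((2 : Fin 3), (0 : ℕ))) -
        X ((2 : Fin 3), (0 : ℕ)) * δ (X ((0 : Fin 3), (0 : ℕ))))) :
    D1 w0 = 0 := by
  rw [hw0, C_mul', hD1]
  exact D1_w0_eq_zero_general (lie_eq_zero_of_apply_X_fin_three hδ hd1x hd1y hd1z)
    (hd1x 0) (hd1y 0) (hd1z 0) _ _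
end

section
/- Let V be the k-linear span of the set of monomials u of A with deg(u) − d(u) = 1, where for a monomial u with exponent function m we set deg(u) = Σ_{(i,r)} m(i,r) and d(u) = Σ_{(i,r)} r·m(i,r). Then the derivation D₁ maps V into V; in particular D₁ restricts to a k-linear endomorphism of the copy of the free Novikov algebra inside A. -/
open MvPolynomial

/-! Give `X (i, r)` the weight `1 - r`. Then `V` is the space of weighted homogeneous polynomials of
weight `1`, `∂₁` preserves weights, and `δ` lowers them by `1`. Since `w` has weight `2`, the
factor `δ² w` has weight `0`, so `D₁` preserves weights. -/

section Weighted

variable {σ R M : Type*} [CommSemiring R] [AddCommMonoid M] {wt : σ → M}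

theorem isWeightedHomogeneous_derivation_monomial
    {D : Derivation R (MvPolynomial σ R) (MvPolynomial σ R)} {s : M}
    (hD : ∀ i, IsWeightedHomogeneous wt (D (X i)) (wt i + s)) (m : σ →₀ ℕ) (a : R) :
    IsWeightedHomogeneous wt (D (monomial m a)) (Finsupp.weight wt m + s) := by
  have hmk : D = mkDerivation R fun i => D (X i) :=
    derivation_ext fun i => (mkDerivation_X R (fun i => D (X i)) i).symm
  rw [hmk, mkDerivation_monomial]
  refine Submodule.smul_mem (weightedHomogeneousSubmodule R wt _) a
    (Submodule.sum_mem _ fun i hi => ?_)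
  rw [← Finsupp.weight_sub_single_add (w := wt) (Finsupp.mem_support_iff.mp hi), add_assoc]
  exact (isWeightedHomogeneous_monomial wt _ _ rfl).mul (hD i)

theorem isWeightedHomogeneous_derivation
    {D : Derivation R (MvPolynomial σ R) (MvPolynomial σ R)} {s n : M}
    (hD : ∀ i, IsWeightedHomogeneous wt (D (X i)) (wt i + s)) {f : MvPolynomial σ R}
    (hf : IsWeightedHomogeneous wt f n) : IsWeightedHomogeneous wt (D f) (n + s) := by
  induction hf using IsWeightedHomogeneous.induction_on with
  | zero => simpa only [map_zero] using isWeightedHomogeneous_zero R wt (n + s)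
  | add f g _ _ hf hg => simpa only [map_add] using hf.add hg
  | monomial m a hm => exact hm ▸ isWeightedHomogeneous_derivation_monomial hD m a

variable (wt) in
theorem span_monomial_eq_weightedHomogeneousSubmodule (n : M) :
    Submodule.span R {u : MvPolynomial σ R | ∃ m, u = monomial m 1 ∧ Finsupp.weight wt m = n} =
      weightedHomogeneousSubmodule R wt n := by
  rw [weightedHomogeneousSubmodule_eq_finsupp_supported,
    AddMonoidAlgebra.supported_eq_span_single]
  congr 1
  ext u
  exact exists_congr fun m => by rw [and_comm, eq_comm (a := u)]; rfl

end Weighted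

section Novikov

variable {ι R : Type*}

/-- The weight `1 - r` of `X (i, r)`. The weight of a monomial is then `deg - d`, and the free
Novikov algebra is the component of weight `1`. -/
def novikovWeight (p : ι × ℕ) : ℤ := 1 - p.2

theorem weight_novikovWeight (m : ι × ℕ →₀ ℕ) :
    Finsupp.weight novikovWeight m =
      ((m.sum fun _ e => e : ℕ) : ℤ) - ((m.sum fun p e => p.2 * e : ℕ) : ℤ) := by
  rw [Finsupp.weight_apply]
  simp only [Finsupp.sum]
  push_cast
  rw [← Finset.sum_sub_distrib]
  refine Finset.sum_congr rfl fun p _ => ?_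
  rw [novikovWeight, nsmul_eq_mul]
  ring

variable (ι R) in
theorem span_novikov_monomial_eq_weightedHomogeneousSubmodule [CommSemiring R] :
    Submodule.span R {u : MvPolynomial (ι × ℕ) R |
        ∃ m : (ι × ℕ) →₀ ℕ, u = monomial m 1 ∧
          (m.sum fun _ e => e) = (m.sum fun p e => p.2 * e) + 1} =
      weightedHomogeneousSubmodule R novikovWeight 1 := by
  have weight_eq_one_iff (m : (ι × ℕ) →₀ ℕ) : Finsupp.weight novikovWeight m = 1 ↔
      (m.sum fun _ e => e) = (m.sum fun p e => p.2 * e) + 1 := by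
    rw [weight_novikovWeight]
    omega
  simp only [← span_monomial_eq_weightedHomogeneousSubmodule, weight_eq_one_iff]

theorem isWeightedHomogeneous_novikovWeight_totalDerivative [CommSemiring R]
    {δ : Derivation R (MvPolynomial (ι × ℕ) R) (MvPolynomial (ι × ℕ) R)}
    (hδ : ∀ i r, δ (X (i, r)) = X (i, r + 1)) {f : MvPolynomial (ι × ℕ) R} {n : ℤ}
    (hf : IsWeightedHomogeneous novikovWeight f n) :
    IsWeightedHomogeneous novikovWeight (δ f) (n - 1) := by
  refine isWeightedHomogeneous_derivation (s := -1) (fun ⟨i, r⟩ => ?_) hf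
  have hweight : novikovWeight (i, r) + -1 = novikovWeight (i, r + 1) := by
    simp only [novikovWeight]
    omega
  rw [hδ, hweight]
  exact isWeightedHomogeneous_X R novikovWeight _

theorem isWeightedHomogeneous_novikovWeight_d1 [CommSemiring R]
    {d1 : Derivation R (MvPolynomial (Fin 3 × ℕ) R) (MvPolynomial (Fin 3 × ℕ) R)}
    (hd1x : ∀ r, d1 (X (0, r)) = 2 * X (1, r)) (hd1y : ∀ r, d1 (X (1, r)) = X (2, r))
    (hd1z : ∀ r, d1 (X (2, r)) = 0) {f : MvPolynomial (Fin 3 × ℕ) R} {n : ℤ}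
    (hf : IsWeightedHomogeneous novikovWeight f n) :
    IsWeightedHomogeneous novikovWeight (d1 f) n := by
  have hX (i j : Fin 3) (r : ℕ) :
      IsWeightedHomogeneous novikovWeight (X (i, r) : MvPolynomial (Fin 3 × ℕ) R)
        (novikovWeight (j, r)) :=
    isWeightedHomogeneous_X R novikovWeight (i, r)
  have hd1 : ∀ p, IsWeightedHomogeneous novikovWeight (d1 (X p)) (novikovWeight p)
    | (0, r) => by rw [hd1x, two_mul]; exact (hX 1 0 r).add (hX 1 0 r)
    | (1, r) => by rw [hd1y]; exact hX 2 1 r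
    | (2, r) => by rw [hd1z]; exact isWeightedHomogeneous_zero R novikovWeight _
  simpa only [add_zero] using isWeightedHomogeneous_derivation (s := 0) (by simpa using hd1) hf

theorem isWeightedHomogeneous_novikovWeight_sq_sub_mul [CommRing R] (i j l : ι) :
    IsWeightedHomogeneous novikovWeight
      (X (i, 0) ^ 2 - X (j, 0) * X (l, 0) : MvPolynomial (ι × ℕ) R) 2 := by
  have hX (i : ι) : IsWeightedHomogeneous novikovWeight (X (i, 0) : MvPolynomial (ι × ℕ) R) 1 :=
    isWeightedHomogeneous_X R novikovWeight (i, 0)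
  exact ((hX i).pow 2).sub ((hX j).mul (hX l))

end Novikov

theorem D1_preserves_novikov_general (k : Type*) [CommRing k] (c : k)
    (δ d1 D1 : Derivation k (MvPolynomial (Fin 3 × ℕ) k) (MvPolynomial (Fin 3 × ℕ) k))
    (hδ : ∀ (i : Fin 3) (r : ℕ), δ (X (i, r)) = X (i, r + 1))
    (hd1x : ∀ r : ℕ, d1 (X ((0 : Fin 3), r)) = 2 * X ((1 : Fin 3), r))
    (hd1y : ∀ r : ℕ, d1 (X ((1 : Fin 3), r)) = X ((2 : Fin 3), r))
    (hd1z : ∀ r : ℕ, d1 (X ((2 : Fin 3), r)) = 0)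
    (w : MvPolynomial (Fin 3 × ℕ) k)
    (hw : w = X ((1 : Fin 3), (0 : ℕ)) ^ 2 - X ((0 : Fin 3), (0 : ℕ)) * X ((2 : Fin 3), (0 : ℕ)))
    (hD1 : ∀ f : MvPolynomial (Fin 3 × ℕ) k, D1 f = C c * δ (δ w) * d1 f) :
    ∀ f ∈ Submodule.span k {u : MvPolynomial (Fin 3 × ℕ) k |
        ∃ m : (Fin 3 × ℕ) →₀ ℕ, u = monomial m 1 ∧
          (m.sum fun _ e => e) = (m.sum fun p e => p.2 * e) + 1},
      D1 f ∈ Submodule.span k {u : MvPolynomial (Fin 3 × ℕ) k |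
        ∃ m : (Fin 3 × ℕ) →₀ ℕ, u = monomial m 1 ∧
          (m.sum fun _ e => e) = (m.sum fun p e => p.2 * e) + 1} := by
  intro f hf
  rw [span_novikov_monomial_eq_weightedHomogeneousSubmodule] at hf ⊢
  have hw2 : IsWeightedHomogeneous novikovWeight w 2 :=
    hw ▸ isWeightedHomogeneous_novikovWeight_sq_sub_mul 1 0 2
  have hδδw : IsWeightedHomogeneous novikovWeight (δ (δ w)) 0 :=
    isWeightedHomogeneous_novikovWeight_totalDerivative hδ
      (isWeightedHomogeneous_novikovWeight_totalDerivative hδ hw2)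
  have hd1f : IsWeightedHomogeneous novikovWeight (d1 f) 1 :=
    isWeightedHomogeneous_novikovWeight_d1 hd1x hd1y hd1z hf
  rw [hD1]
  exact (hδδw.C_mul c).mul hd1f

/-- The derivation `D₁` maps the span `V` of the monomials with `deg - d = 1`
(the copy of the free Novikov algebra inside `A`) into itself. -/
theorem D1_preserves_novikov (k : Type*) [Field k] [CharZero k]
    (δ d1 D1 : Derivation k (MvPolynomial (Fin 3 × ℕ) k) (MvPolynomial (Fin 3 × ℕ) k))
    (hδ : ∀ (i : Fin 3) (r : ℕ), δ (X (i, r)) = X (i, r + 1))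
    (hd1x : ∀ r : ℕ, d1 (X ((0 : Fin 3), r)) = 2 * X ((1 : Fin 3), r))
    (hd1y : ∀ r : ℕ, d1 (X ((1 : Fin 3), r)) = X ((2 : Fin 3), r))
    (hd1z : ∀ r : ℕ, d1 (X ((2 : Fin 3), r)) = 0)
    (w : MvPolynomial (Fin 3 × ℕ) k)
    (hw : w = X ((1 : Fin 3), (0 : ℕ)) ^ 2 - X ((0 : Fin 3), (0 : ℕ)) * X ((2 : Fin 3), (0 : ℕ)))
    (hD1 : ∀ f : MvPolynomial (Fin 3 × ℕ) k, D1 f = C ((2 : k)⁻¹) * δ (δ w) * d1 f) :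
    ∀ f ∈ Submodule.span k {u : MvPolynomial (Fin 3 × ℕ) k |
        ∃ m : (Fin 3 × ℕ) →₀ ℕ, u = monomial m 1 ∧
          (m.sum fun _ e => e) = (m.sum fun p e => p.2 * e) + 1},
      D1 f ∈ Submodule.span k {u : MvPolynomial (Fin 3 × ℕ) k |
        ∃ m : (Fin 3 × ℕ) →₀ ℕ, u = monomial m 1 ∧
          (m.sum fun _ e => e) = (m.sum fun p e => p.2 * e) + 1} :=
  D1_preserves_novikov_general k (2 : k)⁻¹ δ d1 D1 hδ hd1x hd1y hd1z w hw hD1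
end

section
/- The derivation D = w • ∂ of B (i.e. D(f) = w·∂(f)) satisfies D(x) = 2yw, D²(x) = 2zw², D³(x) = 0, D(y) = zw, D²(y) = 0, D(z) = 0, and D is locally nilpotent: for every f ∈ B there exists m ∈ ℕ with D^m(f) = 0. -/
open MvPolynomial

/-!
Since `∂w = 0`, the powers of `D = w • ∂` are `D ^ m = w ^ m • ∂ ^ m`, so everything reduces to `∂`,
which visibly kills `x`, `y` and `z` after three steps. By the Leibniz rule the elements killed by
some power of a derivation form a subalgebra, so it suffices to look at these generators.
-/

theorem iterate_map_eq_zero_of_le {M F : Type*} [Zero M] [FunLike F M M] [ZeroHomClass F M M]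
    {φ : F} {m n : ℕ} {a : M} (hmn : m ≤ n) (ha : φ^[m] a = 0) : φ^[n] a = 0 := by
  obtain ⟨l, rfl⟩ := Nat.exists_eq_add_of_le' hmn
  rw [Function.iterate_add_apply, ha, iterate_map_zero]

section

variable {R A : Type*} [CommSemiring R] [CommSemiring A] [Algebra R A] {d : Derivation R A A}

theorem iterate_derivation_add_mul_eq_zero {m n : ℕ} {f g : A} (hf : d^[m] f = 0)
    (hg : d^[n] g = 0) : d^[m + n] (f * g) = 0 := by
  induction hN : m + n generalizing m n f g with
  | zero =>
    obtain ⟨rfl, rfl⟩ := Nat.add_eq_zero_iff.mp hN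
    rw [Function.iterate_zero_apply] at hf ⊢
    rw [hf, zero_mul]
  | succ N ih =>
    rcases m with _ | m
    · rw [Function.iterate_zero_apply] at hf
      rw [hf, zero_mul, iterate_map_zero]
    rcases n with _ | n
    · rw [Function.iterate_zero_apply] at hg
      rw [hg, mul_zero, iterate_map_zero]
    have hfg : d^[N] (f * d g) = 0 := ih hf hg (by lia)
    have hgf : d^[N] (g * d f) = 0 := ih hg hf (by lia)
    rw [Function.iterate_succ_apply, d.leibniz, smul_eq_mul, smul_eq_mul, iterate_map_add,
      hfg, hgf, add_zero]

/-- The subalgebra `Nil(d)` of elements killed by some power of the derivation `d`. Thus `d` is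
locally nilpotent exactly when `nilSubalgebra d = ⊤`. -/
def nilSubalgebra (d : Derivation R A A) : Subalgebra R A where
  carrier := {f | ∃ m : ℕ, d^[m] f = 0}
  mul_mem' := fun ⟨m, hf⟩ ⟨n, hg⟩ => ⟨m + n, iterate_derivation_add_mul_eq_zero hf hg⟩
  add_mem' := fun ⟨m, hf⟩ ⟨n, hg⟩ => ⟨max m n, by
    rw [iterate_map_add, iterate_map_eq_zero_of_le (le_max_left m n) hf,
      iterate_map_eq_zero_of_le (le_max_right m n) hg, add_zero]⟩
  algebraMap_mem' r := ⟨1, d.map_algebraMap r⟩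

theorem nilSubalgebra_eq_top_of_adjoin_eq_top {s : Set A} (hs : Algebra.adjoin R s = ⊤)
    (hd : s ⊆ nilSubalgebra d) : nilSubalgebra d = ⊤ :=
  top_le_iff.mp (hs ▸ Algebra.adjoin_le hd)

theorem iterate_smul_derivation_apply {w : A} (hw : d w = 0) (m : ℕ) (f : A) :
    (w • d)^[m] f = w ^ m * d^[m] f := by
  induction m with
  | zero => simp
  | succ m ih =>
    have hwm : d (w ^ m) = 0 := by rw [d.leibniz_pow, hw, smul_zero, smul_zero]
    rw [Function.iterate_succ_apply', ih, Derivation.smul_apply, d.leibniz, hwm, smul_zero,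
      add_zero, smul_eq_mul, smul_eq_mul, ← mul_assoc, ← pow_succ', Function.iterate_succ_apply']

theorem nilSubalgebra_le_nilSubalgebra_smul {w : A} (hw : d w = 0) :
    nilSubalgebra d ≤ nilSubalgebra (w • d) := fun f ⟨m, hf⟩ =>
  ⟨m, by rw [iterate_smul_derivation_apply hw, hf, mul_zero]⟩

theorem nilSubalgebra_eq_top_of_triangular {x y z : A} (hgen : Algebra.adjoin R {x, y, z} = ⊤)
    (hdx : d x = 2 * y) (hdy : d y = z) (hdz : d z = 0) : nilSubalgebra d = ⊤ := by
  refine nilSubalgebra_eq_top_of_adjoin_eq_top hgen ?_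
  rintro _ (rfl | rfl | rfl)
  · exact ⟨3, by simp [hdx, hdy, hdz, two_mul]⟩
  · exact ⟨2, by simp [hdy, hdz]⟩
  · exact ⟨1, hdz⟩

theorem D_locally_nilpotent_poly_general {x y z w : A}
    (hgen : Algebra.adjoin R {x, y, z} = ⊤)
    (hdx : d x = 2 * y) (hdy : d y = z) (hdz : d z = 0) (hdw : d w = 0) :
    (w • d) x = 2 * y * w ∧
    (w • d) ((w • d) x) = 2 * z * w ^ 2 ∧
    (w • d) ((w • d) ((w • d) x)) = 0 ∧
    (w • d) y = z * w ∧
    (w • d) ((w • d) y) = 0 ∧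
    (w • d) z = 0 ∧
    ∀ f : A, ∃ m : ℕ, (w • d)^[m] f = 0 := by
  have iterate_eq (m : ℕ) (f : A) := iterate_smul_derivation_apply hdw m f
  have hd2x : d (d x) = 2 * z := by rw [hdx, two_mul, map_add, hdy, ← two_mul]
  have hd3x : d (d (d x)) = 0 := by rw [hd2x, two_mul, map_add, hdz, add_zero]
  have hd2y : d (d y) = 0 := by rw [hdy, hdz]
  refine ⟨?_, ?_, ?_, ?_, ?_, ?_, fun f => ?_⟩
  · exact (iterate_eq 1 x).trans (by simp [hdx, mul_comm])
  · exact (iterate_eq 2 x).trans (by simp [hd2x, mul_comm])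
  · exact (iterate_eq 3 x).trans (by simp [hd3x])
  · exact (iterate_eq 1 y).trans (by simp [hdy, mul_comm])
  · exact (iterate_eq 2 y).trans (by simp [hd2y])
  · exact (iterate_eq 1 z).trans (by simp [hdz])
  · exact nilSubalgebra_le_nilSubalgebra_smul hdw
      (nilSubalgebra_eq_top_of_triangular hgen hdx hdy hdz ▸ Algebra.mem_top)

end

theorem derivation_sq_sub_mul_eq_zero_s14 {R A : Type*} [CommSemiring R] [CommRing A]
    [Algebra R A] {d : Derivation R A A} {x y z : A} (hdx : d x = 2 * y)
    (hdy : d y = z) (hdz : d z = 0) : d (y ^ 2 - x * z) = 0 := by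
  rw [map_sub, d.leibniz_pow, d.leibniz, hdx, hdy, hdz]
  simp only [smul_eq_mul, nsmul_eq_mul]
  ring

theorem adjoin_X_fin_three (R : Type*) [CommSemiring R] :
    Algebra.adjoin R {X 0, X 1, X 2} = (⊤ : Subalgebra R (MvPolynomial (Fin 3) R)) := by
  rw [← adjoin_range_X]
  congr 1
  ext p
  simp [Fin.exists_fin_succ, eq_comm]

/-- The triangular derivation `D = w • ∂` of `k[x,y,z]` satisfies the listed identities and is
locally nilpotent. -/
theorem D_locally_nilpotent_poly (k : Type*) [Field k] [CharZero k]
    (d D : Derivation k (MvPolynomial (Fin 3) k) (MvPolynomial (Fin 3) k))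
    (hdx : d (X (0 : Fin 3)) = 2 * X (1 : Fin 3))
    (hdy : d (X (1 : Fin 3)) = X (2 : Fin 3))
    (hdz : d (X (2 : Fin 3)) = 0)
    (w : MvPolynomial (Fin 3) k)
    (hw : w = X (1 : Fin 3) ^ 2 - X (0 : Fin 3) * X (2 : Fin 3))
    (hD : ∀ f : MvPolynomial (Fin 3) k, D f = w * d f) :
    D (X (0 : Fin 3)) = 2 * X (1 : Fin 3) * w ∧
    D (D (X (0 : Fin 3))) = 2 * X (2 : Fin 3) * w ^ 2 ∧
    D (D (D (X (0 : Fin 3)))) = 0 ∧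
    D (X (1 : Fin 3)) = X (2 : Fin 3) * w ∧
    D (D (X (1 : Fin 3))) = 0 ∧
    D (X (2 : Fin 3)) = 0 ∧
    ∀ f : MvPolynomial (Fin 3) k, ∃ m : ℕ, (⇑D)^[m] f = 0 := by
  obtain rfl : D = w • d := Derivation.ext hD
  exact D_locally_nilpotent_poly_general (adjoin_X_fin_three k) hdx hdy hdz
    (hw ▸ derivation_sq_sub_mul_eq_zero_s14 hdx hdy hdz)
end
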